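/- arXiv:math/9802032 — 2 statements merged into one kernel-verified Lean document; each statement's English description precedes it below -/
import Mathlib

section
/- Let n ≥ 2 be an integer, let r be an odd prime with r > n, let ζ = exp(2πi/r) ∈ ℂ, and let b be an integer not divisible by r. Then the multi-variable Gauss sum attached to the Cartan matrix A of sl_n satisfies ∑_{k ∈ {0,…,r−1}^{n−1}} ζ^{b·(kᵗAk)/2} = (n/r) · ( (b/r) · e^{iπ(1−r)/4} · √r )^{n−1}, where (·/r) denotes the Legendre symbol and √r > 0. -/
/-!
Write `ψ(j) = ζ^j` on `ZMod r` and `A/2` for the halved quadratic form, which is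
`E(k) = ∑ kᵢ² - ∑ kᵢ kᵢ₋₁`. Summing out one variable at a time and completing the square
diagonalises `E` with coefficients `u_j / 2`, `u_j = (j + 1) / j`. Counting square roots with
the quadratic character shows `∑ ψ(u x² / 2) = (u/r) H` for `H = ∑ ψ(x² / 2)`
(`halfGauss_scale`), and `∏ u_j = n`, so the sum is `(n/r) ((b/r) H)^(n-1)` (`chainSum_eq`).

It remains to evaluate `H`, including its sign. Gauss's identity for alternating sums of Gaussian
binomials (`gaussAlt_even`),
`∑_k (-1)^k [2m, k]_q = ∏_{i<m} (1 - q^(2i+1))`,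
taken at `q = ζ⁻¹`, `r = 2m + 1`, where `(-1)^k [2m, k]_q = ζ^(k(k+1)/2)`, yields
`∑_k ζ^(k(k+1)/2) = ∏_{i<m} (1 - ζ^(-(2i+1)))`. Completing the square on the left, and writing each
factor on the right as a phase times `2 sin(π(2i+1)/r) > 0`, shows that `H` is a positive
multiple of `(-i)^m = exp(iπ(1-r)/4)` (`halfGauss_phase`). Finally `|H|² = r` by orthogonality
of characters (`halfGauss_norm_sq`).
-/

open scoped BigOperators

/-- `ζ = exp(2πi/r)`. -/
noncomputable def zetaC (r : ℕ) : ℂ := Complex.exp (2 * Real.pi * Complex.I / r)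

/-- The `(n-1)×(n-1)` Cartan matrix of `sl_n`. -/
def cartan (n : ℕ) : Matrix (Fin (n - 1)) (Fin (n - 1)) ℤ :=
  Matrix.of fun i j =>
    if (i : ℕ) = (j : ℕ) then 2
    else if (i : ℕ) + 1 = (j : ℕ) ∨ (j : ℕ) + 1 = (i : ℕ) then -1 else 0

/-- The quadratic form `kᵗAk` attached to the Cartan matrix of `sl_n`. -/
def qf (n : ℕ) (k : Fin (n - 1) → ℤ) : ℤ := ∑ i, ∑ j, k i * cartan n i j * k j

/-! ### Gaussian binomials and Gauss's alternating sum -/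

/-- The Gaussian binomial coefficient `[n, k]_q`, defined by the `q`-Pascal rule. -/
def qBinom {R : Type*} [CommRing R] (q : R) : ℕ → ℕ → R
  | _, 0 => 1
  | 0, _ + 1 => 0
  | n + 1, k + 1 => qBinom q n k + q ^ (k + 1) * qBinom q n (k + 1)

section QBinom

variable {R : Type*} [CommRing R] (q : R)

lemma qBinom_zero_right (n : ℕ) : qBinom q n 0 = 1 := by cases n <;> rfl

lemma qBinom_succ (n k : ℕ) :
    qBinom q (n + 1) (k + 1) = qBinom q n k + q ^ (k + 1) * qBinom q n (k + 1) := rfl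

lemma qBinom_of_lt (n : ℕ) : ∀ k, n < k → qBinom q n k = 0 := by
  induction n with
  | zero =>
    intro k hk
    obtain ⟨k, rfl⟩ := Nat.exists_eq_succ_of_ne_zero hk.ne'
    rfl
  | succ n ih =>
    intro k hk
    obtain ⟨k, rfl⟩ := Nat.exists_eq_succ_of_ne_zero (Nat.ne_zero_of_lt hk)
    rw [Nat.succ_eq_add_one, qBinom_succ, ih k (by lia), ih (k + 1) (by lia)]
    simp

/-- The ratio of horizontally adjacent Gaussian binomials, cleared of denominators. -/
lemma qBinom_ratio (n : ℕ) : ∀ k ≤ n,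
    (1 - q ^ (k + 1)) * qBinom q n (k + 1) = (1 - q ^ (n - k)) * qBinom q n k := by
  induction n with
  | zero =>
    intro k hk
    obtain rfl : k = 0 := by lia
    simp [qBinom]
  | succ n ih =>
    intro k hk
    rcases k with _ | k
    · have h := ih 0 (by lia)
      rw [qBinom_succ]
      simp only [qBinom_zero_right, Nat.sub_zero, zero_add] at h ⊢
      linear_combination q * h
    · have hk' : k ≤ n := by lia
      have h1 := ih k hk'
      rcases hk'.eq_or_lt with rfl | hlt
      · rw [qBinom_of_lt q (k + 1) (k + 1 + 1) (by lia)]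
        simp
      · have h2 := ih (k + 1) hlt
        have e : n - k = (n - (k + 1)) + 1 := by lia
        have e2 : n = (n - (k + 1)) + (k + 1) := by lia
        rw [qBinom_succ q n (k + 1), qBinom_succ q n k, show n + 1 - (k + 1) = n - k by lia]
        rw [e] at h1 ⊢
        generalize n - (k + 1) = d at *
        linear_combination q ^ (k + 1 + 1) * h2 + h1

/-- The ratio of vertically adjacent Gaussian binomials, cleared of denominators. -/
lemma qBinom_ratio_row (n k : ℕ) (hk : k ≤ n + 1) :
    (1 - q ^ (n + 1 - k)) * qBinom q (n + 1) k = (1 - q ^ (n + 1)) * qBinom q n k := by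
  rcases k with _ | k
  · simp [qBinom_zero_right]
  · have h := qBinom_ratio q n k (by lia)
    have e : q ^ (n + 1) = q ^ (n - k) * q ^ (k + 1) := by rw [← pow_add]; congr 1; lia
    rw [qBinom_succ, show n + 1 - (k + 1) = n - k by lia, e]
    linear_combination -h

/-- The second `q`-Pascal rule. -/
lemma qBinom_succ' (n k : ℕ) (hk : k ≤ n) :
    qBinom q (n + 1) (k + 1) = qBinom q n (k + 1) + q ^ (n - k) * qBinom q n k := by
  have h := qBinom_ratio q n k hk
  rw [qBinom_succ]
  linear_combination -h

/-- The alternating sum `∑_k (-1)^k [n, k]_q`. -/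
def gaussAlt (n : ℕ) : R := ∑ k ∈ Finset.range (n + 1), (-1) ^ k * qBinom q n k

lemma gaussAlt_extend (n : ℕ) :
    gaussAlt q n = ∑ k ∈ Finset.range (n + 2), (-1) ^ k * qBinom q n k := by
  rw [Finset.sum_range_succ, qBinom_of_lt q n (n + 1) (by lia)]
  simp [gaussAlt]

lemma gaussAlt_add_two (n : ℕ) : gaussAlt q (n + 2) = (1 - q ^ (n + 1)) * gaussAlt q n := by
  have h1 := gaussAlt_extend q (n + 1)
  rw [Finset.sum_range_succ'] at h1
  have h2 : gaussAlt q (n + 1) = ∑ k ∈ Finset.range (n + 2), (-1) ^ k * qBinom q (n + 1) k := rfl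
  have h3 : (1 - q ^ (n + 1)) * gaussAlt q n =
      ∑ k ∈ Finset.range (n + 2), (-1) ^ k * ((1 - q ^ (n + 1 - k)) * qBinom q (n + 1) k) := by
    rw [gaussAlt_extend, Finset.mul_sum]
    refine Finset.sum_congr rfl fun k hk => ?_
    rw [qBinom_ratio_row q n k (by have := Finset.mem_range.1 hk; lia)]
    ring
  have h4 : gaussAlt q (n + 2) = ∑ k ∈ Finset.range (n + 2), (-1) ^ (k + 1) *
      (qBinom q (n + 1) (k + 1) + q ^ (n + 1 - k) * qBinom q (n + 1) k) + 1 := by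
    rw [gaussAlt, Finset.sum_range_succ']
    simp only [qBinom_zero_right, pow_zero, mul_one]
    congr 1
    refine Finset.sum_congr rfl fun k hk => ?_
    rw [qBinom_succ' q (n + 1) k (by have := Finset.mem_range.1 hk; lia)]
  simp only [qBinom_zero_right, pow_zero, mul_one] at h1
  rw [h4, h3]
  simp only [mul_add, mul_sub, sub_mul, Finset.sum_add_distrib, Finset.sum_sub_distrib, pow_succ,
    one_mul, mul_neg, mul_one, neg_mul, Finset.sum_neg_distrib] at h1 h2 ⊢
  linear_combination -h1 + h2

/-- Gauss's identity. -/
lemma gaussAlt_even (m : ℕ) :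
    gaussAlt q (2 * m) = ∏ i ∈ Finset.range m, (1 - q ^ (2 * i + 1)) := by
  induction m with
  | zero => simp [gaussAlt, qBinom]
  | succ m ih =>
    rw [Finset.prod_range_succ, ← ih, show 2 * (m + 1) = 2 * m + 2 by ring, gaussAlt_add_two,
      mul_comm]

end QBinom

/-- At a root of unity of order `2m + 1` the Gaussian binomials `[2m, k]` are, up to sign,
powers of the root. -/
lemma qBinom_root {K : Type*} [Field K] {z : K} {m : ℕ} (hz : IsPrimitiveRoot z (2 * m + 1)) :
    ∀ k ≤ 2 * m, (-1) ^ k * qBinom z⁻¹ (2 * m) k = z ^ (k * (k + 1) / 2) := by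
  have hz0 : z ≠ 0 := hz.ne_zero (by lia)
  intro k
  induction k with
  | zero => simp [qBinom_zero_right]
  | succ k ih =>
    intro hk
    have h := qBinom_ratio z⁻¹ (2 * m) k (by lia)
    have e1 : z⁻¹ ^ (2 * m - k) = z ^ (k + 1) := by
      rw [inv_pow, eq_comm]
      refine eq_inv_of_mul_eq_one_left ?_
      rw [← pow_add, show k + 1 + (2 * m - k) = 2 * m + 1 by lia, hz.pow_eq_one]
    have e2 : (k + 1) * (k + 1 + 1) / 2 = k * (k + 1) / 2 + (k + 1) := by
      rw [show (k + 1) * (k + 1 + 1) = k * (k + 1) + (k + 1) * 2 by ring,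
        Nat.add_mul_div_right _ _ (by norm_num)]
    have hne : z ^ (k + 1) ≠ 1 := hz.pow_ne_one_of_pos_of_lt (by lia) (by lia)
    have hne' : (1 : K) - z⁻¹ ^ (k + 1) ≠ 0 := by
      rw [inv_pow, sub_ne_zero]
      intro h'
      exact hne (by rw [← inv_inv (z ^ (k + 1)), ← h', inv_one])
    have hzz : z ^ (k + 1) * z⁻¹ ^ (k + 1) = 1 := by
      rw [← mul_pow, mul_inv_cancel₀ hz0, one_pow]
    rw [e1] at h
    rw [e2, pow_add z, ← ih (by lia)]
    apply mul_left_cancel₀ hne'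
    rw [pow_succ (-1 : K)]
    linear_combination -(-1) ^ k * h + (-1) ^ k * qBinom z⁻¹ (2 * m) k * hzz

/-- The evaluation of a theta-like sum over a full period as a product. -/
lemma sum_triangular {K : Type*} [Field K] {z : K} {m : ℕ}
    (hz : IsPrimitiveRoot z (2 * m + 1)) :
    ∑ k ∈ Finset.range (2 * m + 1), z ^ (k * (k + 1) / 2) =
      ∏ i ∈ Finset.range m, (1 - z⁻¹ ^ (2 * i + 1)) := by
  rw [← gaussAlt_even, gaussAlt]
  exact Finset.sum_congr rfl fun k hk =>
    (qBinom_root hz k (by have := Finset.mem_range.1 hk; lia)).symm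

/-! ### The one-variable Gauss sum -/

/-- The Gauss sum `∑ ψ(x² / 2)` over `ZMod r`, where `1/2` is the inverse modulo `r`. -/
noncomputable def halfGauss (r : ℕ) [Fact r.Prime] : ℂ :=
  ∑ x : ZMod r, ZMod.stdAddChar (x ^ 2 * 2⁻¹)

section OneVariable

variable {r : ℕ} [Fact r.Prime]

lemma zmod_two_ne_zero (hodd : Odd r) : (2 : ZMod r) ≠ 0 := by
  apply Ring.two_ne_zero
  rw [ZMod.ringChar_zmod_n]
  rintro rfl
  exact absurd hodd (by decide)

lemma halfGauss_norm_sq (hodd : Odd r) : ‖halfGauss r‖ ^ 2 = r := by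
  have h2 := zmod_two_ne_zero hodd
  have key : halfGauss r * (starRingEnd ℂ) (halfGauss r) = r := by
    have hconj : (starRingEnd ℂ) (halfGauss r) =
        ∑ y : ZMod r, ZMod.stdAddChar (-(y ^ 2 * 2⁻¹)) := by
      simp [halfGauss, AddChar.map_neg_eq_conj]
    rw [hconj, Finset.mul_sum]
    -- Substitute `x = u + y`; the exponent becomes linear in `y`.
    have h : ∀ y : ZMod r, halfGauss r * ZMod.stdAddChar (-(y ^ 2 * 2⁻¹)) =
        ∑ u : ZMod r, ZMod.stdAddChar (u ^ 2 * 2⁻¹) * (ZMod.stdAddChar (y * u) : ℂ) := by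
      intro y
      rw [halfGauss, Finset.sum_mul, ← Equiv.sum_comp (Equiv.addRight y)]
      refine Finset.sum_congr rfl fun u _ => ?_
      rw [← AddChar.map_add_eq_mul, ← AddChar.map_add_eq_mul]
      congr 1
      simp only [Equiv.coe_addRight]
      field_simp
      ring
    simp_rw [h]
    rw [Finset.sum_comm]
    simp_rw [← Finset.mul_sum, AddChar.sum_mulShift _ (ZMod.isPrimitive_stdAddChar r)]
    simp [ZMod.card]
  rw [Complex.mul_conj, Complex.normSq_eq_norm_sq] at key
  exact_mod_cast key

/-- Scaling the quadratic form by `u` multiplies the Gauss sum by the quadratic character: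
both sides are twisted Gauss sums, because `1 + χ(t)` counts the square roots of `t`. -/
lemma halfGauss_scale (hodd : Odd r) {u : ZMod r} (hu : u ≠ 0) :
    ∑ x : ZMod r, (ZMod.stdAddChar (u * (x ^ 2 * 2⁻¹)) : ℂ) =
      (quadraticChar (ZMod r) u : ℂ) * halfGauss r := by
  have h2 := zmod_two_ne_zero hodd
  have hF : ringChar (ZMod r) ≠ 2 := fun h => by
    rw [ZMod.ringChar_zmod_n] at h
    subst h
    exact absurd hodd (by decide)
  let χ : MulChar (ZMod r) ℂ := (quadraticChar (ZMod r)).ringHomComp (Int.castRingHom ℂ)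
  -- A sum over squares is the Gauss sum of the quadratic character.
  have key : ∀ a : ZMod r, a ≠ 0 → ∑ x : ZMod r, (ZMod.stdAddChar (a * x ^ 2) : ℂ) =
      gaussSum χ (ZMod.stdAddChar.mulShift a) := by
    intro a ha
    have h1 : ∑ x : ZMod r, (ZMod.stdAddChar (a * x ^ 2) : ℂ) =
        ∑ t : ZMod r, ∑ x : ZMod r with x ^ 2 = t, (ZMod.stdAddChar (a * t) : ℂ) := by
      rw [← Finset.sum_fiberwise (g := fun x : ZMod r => x ^ 2)]
      refine Finset.sum_congr rfl fun t _ => Finset.sum_congr rfl fun x hx => ?_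
      rw [(Finset.mem_filter.1 hx).2]
    have h3 : ∀ t : ZMod r, ∑ x : ZMod r with x ^ 2 = t, (ZMod.stdAddChar (a * t) : ℂ) =
        χ t * ZMod.stdAddChar (a * t) + ZMod.stdAddChar (t * a) := by
      intro t
      have hc := quadraticChar_card_sqrts hF t
      have hc' : (({x : ZMod r | x ^ 2 = t}.toFinset.card : ℤ) : ℂ) = χ t + 1 := by
        rw [hc]
        simp [χ]
      rw [Finset.sum_const, nsmul_eq_mul, mul_comm t a]
      have : (Finset.univ.filter fun x : ZMod r => x ^ 2 = t) =
          {x : ZMod r | x ^ 2 = t}.toFinset := by ext; simp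
      rw [this]
      push_cast at hc'
      rw [hc']
      ring
    rw [h1]
    simp_rw [h3]
    rw [Finset.sum_add_distrib, AddChar.sum_mulShift a (ZMod.isPrimitive_stdAddChar r), if_neg ha]
    simp [gaussSum, AddChar.mulShift_apply]
  have hu2 : u * 2⁻¹ ≠ 0 := mul_ne_zero hu (inv_ne_zero h2)
  have e1 : ∑ x : ZMod r, (ZMod.stdAddChar (u * (x ^ 2 * 2⁻¹)) : ℂ) =
      gaussSum χ (ZMod.stdAddChar.mulShift (u * 2⁻¹)) := by
    rw [← key _ hu2]
    exact Finset.sum_congr rfl fun x _ => by congr 1; ring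
  have e2 : halfGauss r = gaussSum χ (ZMod.stdAddChar.mulShift 2⁻¹) := by
    rw [← key _ (inv_ne_zero h2), halfGauss]
    exact Finset.sum_congr rfl fun x _ => by congr 1; ring
  have h := gaussSum_mulShift χ (ZMod.stdAddChar.mulShift (2⁻¹ : ZMod r)) (Units.mk0 u hu)
  rw [AddChar.mulShift_mulShift, Units.val_mk0, mul_comm (2⁻¹ : ZMod r) u, ← e1, ← e2] at h
  have hχ : χ u = (quadraticChar (ZMod r) u : ℂ) := rfl
  rw [hχ] at h
  have hsq : ((quadraticChar (ZMod r) u : ℤ) : ℂ) ^ 2 = 1 := by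
    exact_mod_cast quadraticChar_sq_one hu
  rw [← h]
  linear_combination -(∑ x : ZMod r, (ZMod.stdAddChar (u * (x ^ 2 * 2⁻¹)) : ℂ)) * hsq

/-- Each factor `1 - ζ^(-(2i+1))` is a phase times a positive sine, and the phases multiply up
because `1 + 3 + ⋯ + (2k-1) = k²`. -/
lemma prod_phase {m : ℕ} (hm : r = 2 * m + 1) : ∀ k ≤ m, ∃ P : ℝ, 0 < P ∧
    ∏ i ∈ Finset.range k, (1 - (zetaC r)⁻¹ ^ (2 * i + 1)) =
      Complex.exp (-(Real.pi * Complex.I * k ^ 2 / r)) * Complex.I ^ k * P := by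
  have hr0 : (r : ℂ) ≠ 0 := by exact_mod_cast (Fact.out : r.Prime).ne_zero
  have hrpos : (0 : ℝ) < r := by exact_mod_cast (Fact.out : r.Prime).pos
  intro k
  induction k with
  | zero => exact fun _ => ⟨1, one_pos, by simp⟩
  | succ k ih =>
    intro hk
    obtain ⟨P, hP, h⟩ := ih (by lia)
    let θ : ℝ := Real.pi * (2 * k + 1) / r
    have hθ : 0 < Real.sin θ := by
      apply Real.sin_pos_of_pos_of_lt_pi
      · have := Real.pi_pos
        positivity
      · rw [div_lt_iff₀ hrpos]
        apply mul_lt_mul_of_pos_left _ Real.pi_pos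
        have : 2 * k + 1 < r := by lia
        exact_mod_cast this
    refine ⟨P * (2 * Real.sin θ), by positivity, ?_⟩
    have hfac : 1 - (zetaC r)⁻¹ ^ (2 * k + 1) =
        Complex.exp (-(θ * Complex.I)) * Complex.I * (2 * Real.sin θ) := by
      have hz : (zetaC r)⁻¹ ^ (2 * k + 1) =
          Complex.exp (-(θ * Complex.I)) * Complex.exp (-(θ * Complex.I)) := by
        rw [zetaC, ← Complex.exp_neg, ← Complex.exp_nat_mul, ← Complex.exp_add]
        congr 1
        simp only [θ]
        push_cast
        field_simp
        ring
      have hone : Complex.exp (-(θ * Complex.I)) * Complex.exp (θ * Complex.I) = 1 := by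
        rw [← Complex.exp_add]; simp
      rw [hz, Complex.ofReal_sin, Complex.sin]
      rw [neg_mul]
      linear_combination -hone - Complex.exp (-(θ * Complex.I)) *
        (Complex.exp (-(θ * Complex.I)) - Complex.exp (θ * Complex.I)) * Complex.I_sq
    rw [Finset.prod_range_succ, h, hfac]
    have hexp : Complex.exp (-(Real.pi * Complex.I * ((k + 1 : ℕ) : ℂ) ^ 2 / r)) =
        Complex.exp (-(Real.pi * Complex.I * k ^ 2 / r)) * Complex.exp (-(θ * Complex.I)) := by
      rw [← Complex.exp_add]
      congr 1
      simp only [θ]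
      push_cast
      field_simp
      ring
    rw [hexp]
    push_cast
    ring

lemma zetaC_zpow (j : ℤ) : zetaC r ^ j = ZMod.stdAddChar (j : ZMod r) := by
  rw [ZMod.stdAddChar_coe, zetaC, ← Complex.exp_int_mul]
  congr 1
  ring

/-- Since `1/2 = m + 1` modulo `r = 2m + 1`, the value `ψ(j/2)` is `(-1)^j exp(πij/r)`. -/
lemma stdAddChar_half {m : ℕ} (hm : r = 2 * m + 1) (j : ℕ) :
    (ZMod.stdAddChar ((j : ZMod r) * 2⁻¹) : ℂ) =
      (-1) ^ j * Complex.exp (Real.pi * Complex.I * j / r) := by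
  have h2 : (2 : ZMod r) ≠ 0 := zmod_two_ne_zero ⟨m, hm⟩
  have hr0 : (r : ℂ) ≠ 0 := by exact_mod_cast (Fact.out : r.Prime).ne_zero
  have hr : (2 : ZMod r) * m + 1 = 0 := by
    have h := congrArg (Nat.cast : ℕ → ZMod r) hm
    rw [ZMod.natCast_self] at h
    push_cast at h
    exact h.symm
  have hinv : (2 : ZMod r)⁻¹ = m + 1 := by
    rw [inv_eq_iff_eq_inv, eq_comm, inv_eq_iff_eq_inv, eq_comm]
    refine inv_eq_of_mul_eq_one_right ?_
    linear_combination hr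
  have hcast : (j : ZMod r) * 2⁻¹ = (((j * (m + 1) : ℕ) : ℤ) : ZMod r) := by
    rw [hinv]; push_cast; ring
  rw [hcast, ZMod.stdAddChar_coe, ← Complex.exp_pi_mul_I, ← Complex.exp_nat_mul,
    ← Complex.exp_add]
  congr 1
  have hrC : (r : ℂ) = 2 * m + 1 := by rw [hm]; push_cast; ring
  field_simp
  rw [hrC]
  push_cast
  ring

/-- The phase of the Gauss sum, from Gauss's product. -/
lemma halfGauss_phase {m : ℕ} (hm : r = 2 * m + 1) :
    ∃ P : ℝ, 0 < P ∧ halfGauss r = (-Complex.I) ^ m * P := by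
  have h2 : (2 : ZMod r) ≠ 0 := zmod_two_ne_zero ⟨m, hm⟩
  have hr0 : r ≠ 0 := (Fact.out : r.Prime).ne_zero
  obtain ⟨P, hP, hprod⟩ := prod_phase hm m le_rfl
  refine ⟨P, hP, ?_⟩
  have hroot : IsPrimitiveRoot (zetaC r) (2 * m + 1) := by
    rw [← hm]; exact Complex.isPrimitiveRoot_exp r hr0
  have hsum := sum_triangular hroot
  rw [hprod, ← hm] at hsum
  have hm0 : (2 : ZMod r) * m + 1 = 0 := by
    have h := congrArg (Nat.cast : ℕ → ZMod r) hm
    rw [ZMod.natCast_self] at h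
    push_cast at h
    exact h.symm
  -- Completing the square: `k(k+1)/2 = (k + 1/2)²/2 - 1/8`, with `1/2 = -m`.
  have hterm : ∀ k : ℕ, (zetaC r) ^ (k * (k + 1) / 2) *
      (ZMod.stdAddChar (((m ^ 2 : ℕ) : ZMod r) * 2⁻¹) : ℂ) =
      ZMod.stdAddChar (((k : ZMod r) - (m : ZMod r)) ^ 2 * (2⁻¹ : ZMod r)) := by
    intro k
    have hk : ((k * (k + 1) / 2 : ℕ) : ZMod r) = (k : ZMod r) * (k + 1) * 2⁻¹ := by
      rw [eq_mul_inv_iff_mul_eq₀ h2]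
      have := Nat.div_mul_cancel (Nat.even_mul_succ_self k).two_dvd
      exact_mod_cast congrArg (Nat.cast : ℕ → ZMod r) this
    rw [← zpow_natCast, zetaC_zpow, Int.cast_natCast, hk, ← AddChar.map_add_eq_mul]
    congr 1
    push_cast
    linear_combination (k : ZMod r) * 2⁻¹ * hm0
  have hH : halfGauss r = (∑ k ∈ Finset.range r, (zetaC r) ^ (k * (k + 1) / 2)) *
      (ZMod.stdAddChar (((m ^ 2 : ℕ) : ZMod r) * 2⁻¹) : ℂ) := by
    rw [Finset.sum_mul]
    simp_rw [hterm]
    rw [halfGauss, ← Equiv.sum_comp (Equiv.subRight (m : ZMod r))]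
    symm
    refine Finset.sum_bij (fun k _ => (k : ZMod r)) (fun _ _ => Finset.mem_univ _) ?_ ?_ ?_
    · intro a ha b hb hab
      rw [ZMod.natCast_eq_natCast_iff'] at hab
      rwa [Nat.mod_eq_of_lt (Finset.mem_range.1 ha),
        Nat.mod_eq_of_lt (Finset.mem_range.1 hb)] at hab
    · intro x _
      exact ⟨x.val, Finset.mem_range.2 (ZMod.val_lt x), ZMod.natCast_zmod_val x⟩
    · intro k _
      rfl
  rw [hH, hsum, stdAddChar_half hm]
  have hexp : Complex.exp (-(Real.pi * Complex.I * m ^ 2 / r)) *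
      Complex.exp (Real.pi * Complex.I * ((m ^ 2 : ℕ) : ℂ) / r) = 1 := by
    rw [← Complex.exp_add]; simp
  have hsign : (-1 : ℂ) ^ (m ^ 2) = (-1) ^ m := by
    rcases Nat.even_or_odd m with h | h
    · rw [h.neg_one_pow, (h.pow_of_ne_zero (by norm_num)).neg_one_pow]
    · rw [h.neg_one_pow, h.pow.neg_one_pow]
  rw [hsign, neg_pow Complex.I]
  linear_combination (-1) ^ m * Complex.I ^ m * P * hexp

lemma halfGauss_eq (hodd : Odd r) : halfGauss r =
    Complex.exp (Real.pi * Complex.I * (1 - (r : ℂ)) / 4) * (Real.sqrt r : ℂ) := by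
  have hnorm := halfGauss_norm_sq hodd
  obtain ⟨m, hm⟩ := hodd
  obtain ⟨P, hP, h⟩ := halfGauss_phase hm
  have hPr : P = Real.sqrt r := by
    rw [h] at hnorm
    rw [← hnorm]
    simp [Real.sqrt_sq hP.le]
  have hI : -Complex.I = Complex.exp (-(Real.pi / 2 * Complex.I)) := by
    rw [Complex.exp_neg, Complex.exp_pi_div_two_mul_I, Complex.inv_I]
  rw [h, hPr, hI, ← Complex.exp_nat_mul]
  congr 2
  rw [hm]
  push_cast
  ring

end OneVariable

/-! ### The chain form and its diagonalisation -/

/-- The form `∑ xᵢ² - ∑ xᵢ xᵢ₋₁`, where the variable preceding `x₀` is the boundary value `y`.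
At `y = 0` it is half the Cartan form. -/
def chain {R : Type*} [CommRing R] (m : ℕ) (y : R) (x : Fin m → R) : R :=
  ∑ i, (x i ^ 2 - x i * (Fin.cons y x : Fin (m + 1) → R) i.castSucc)

lemma chain_cons {R : Type*} [CommRing R] (m : ℕ) (y a : R) (x : Fin m → R) :
    chain (m + 1) y (Fin.cons a x) = a ^ 2 - a * y + chain m a x := by
  simp [chain, Fin.sum_univ_succ]
  ring

lemma chain_boundary {R : Type*} [CommRing R] (m : ℕ) (y : R) (x : Fin m → R) :
    chain m y x = chain m 0 x - ∑ i : Fin m, if (i : ℕ) = 0 then y * x i else 0 := by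
  rcases m with _ | m
  · simp [chain]
  · simp [chain, Fin.sum_univ_succ]
    ring

lemma qf_eq_chain (m : ℕ) (k : Fin m → ℤ) : qf (m + 1) k = 2 * chain m 0 k := by
  induction m with
  | zero => simp [qf, chain]
  | succ m ih =>
    induction k using Fin.consCases with
    | _ a x =>
    rw [chain_cons, chain_boundary, mul_add, mul_sub _ (chain m 0 x), ← ih]
    have hdiag : ∀ i j : Fin m, cartan (m + 2) (Fin.succ i) (Fin.succ j) = cartan (m + 1) i j := by
      intro i j
      simp [cartan]
    have hrow : ∀ j : Fin m, cartan (m + 2) (0 : Fin (m + 1)) (Fin.succ j) =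
        if (j : ℕ) = 0 then -1 else 0 := by
      intro j
      simp [cartan, eq_comm]
    have hcol : ∀ j : Fin m, cartan (m + 2) (Fin.succ j) (0 : Fin (m + 1)) =
        if (j : ℕ) = 0 then -1 else 0 := by
      intro j
      simp [cartan, eq_comm]
    have hzero : cartan (m + 2) (0 : Fin (m + 1)) (0 : Fin (m + 1)) = 2 := by simp [cartan]
    have hexp : qf (m + 1 + 1) (Fin.cons a x : Fin (m + 1) → ℤ) =
        ∑ i : Fin (m + 1), ∑ j : Fin (m + 1), (Fin.cons a x : Fin (m + 1) → ℤ) i *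
          cartan (m + 2) i j * (Fin.cons a x : Fin (m + 1) → ℤ) j := rfl
    have hexp' : qf (m + 1) x = ∑ i : Fin m, ∑ j : Fin m, x i * cartan (m + 1) i j * x j := rfl
    rw [hexp, hexp']
    simp only [Fin.sum_univ_succ, Fin.cons_zero, Fin.cons_succ, hdiag, hrow, hcol, hzero,
      Finset.sum_add_distrib]
    have s1 : ∑ j : Fin m, a * (if (j : ℕ) = 0 then -1 else 0) * x j =
        -∑ i : Fin m, if (i : ℕ) = 0 then a * x i else 0 := by
      rw [← Finset.sum_neg_distrib]
      exact Finset.sum_congr rfl fun j _ => by split_ifs <;> ring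
    have s2 : ∑ j : Fin m, x j * (if (j : ℕ) = 0 then -1 else 0) * a =
        -∑ i : Fin m, if (i : ℕ) = 0 then a * x i else 0 := by
      rw [← Finset.sum_neg_distrib]
      exact Finset.sum_congr rfl fun j _ => by split_ifs <;> ring
    rw [s1, s2]
    ring

lemma chain_intCast {R : Type*} [CommRing R] (m : ℕ) (k : Fin m → ℤ) :
    ((chain m 0 k : ℤ) : R) = chain m 0 fun i => (k i : R) := by
  rw [chain, chain, Int.cast_sum]
  refine Finset.sum_congr rfl fun i _ => ?_
  have h : (((Fin.cons 0 k : Fin (m + 1) → ℤ) i.castSucc : ℤ) : R) =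
      (Fin.cons 0 (fun i => (k i : R)) : Fin (m + 1) → R) i.castSucc := by
    refine Fin.cases ?_ (fun j => ?_) i.castSucc <;> simp
  push_cast
  rw [h]

/-- Summing out the chain variables. With `u = (m+2)/(m+1)`, the step completes the square in
`u x²/2 - x y = u (x - y/u)²/2 - y²/(2u)`. -/
lemma chainSum_eq {r : ℕ} [Fact r.Prime] (hodd : Odd r) {b : ZMod r} (hb : b ≠ 0) (m : ℕ) :
    m + 1 < r → ∀ y : ZMod r,
      ∑ x : Fin m → ZMod r, (ZMod.stdAddChar (b * chain m y x) : ℂ) =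
        (quadraticChar (ZMod r) ((m + 1 : ℕ) : ZMod r) : ℂ) *
          ((quadraticChar (ZMod r) b : ℂ) * halfGauss r) ^ m *
          ZMod.stdAddChar (-(b * y ^ 2 * (m : ZMod r) * (2 * ((m + 1 : ℕ) : ZMod r))⁻¹)) := by
  have h2 := zmod_two_ne_zero hodd
  have hne : ∀ j : ℕ, 0 < j → j < r → ((j : ℕ) : ZMod r) ≠ 0 := by
    intro j h0 hj h
    exact absurd (Nat.le_of_dvd h0 ((ZMod.natCast_eq_zero_iff _ _).1 h)) (by lia)
  induction m with
  | zero => intro _ y; simp [chain]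
  | succ m ih =>
    intro hm y
    have hm1 : ((m + 1 : ℕ) : ZMod r) ≠ 0 := hne _ (by lia) (by lia)
    have hm2 : ((m + 1 + 1 : ℕ) : ZMod r) ≠ 0 := hne _ (by lia) hm
    set u : ZMod r := ((m + 1 + 1 : ℕ) : ZMod r) * ((m + 1 : ℕ) : ZMod r)⁻¹ with hu
    have hu0 : u ≠ 0 := mul_ne_zero hm2 (inv_ne_zero hm1)
    have hsplit : ∑ x : Fin (m + 1) → ZMod r, (ZMod.stdAddChar (b * chain (m + 1) y x) : ℂ) =
        ∑ a : ZMod r, ZMod.stdAddChar (b * (a ^ 2 - a * y)) *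
          ∑ x : Fin m → ZMod r, (ZMod.stdAddChar (b * chain m a x) : ℂ) := by
      rw [← Equiv.sum_comp (Fin.consEquiv fun _ => ZMod r), Fintype.sum_prod_type]
      refine Finset.sum_congr rfl fun a _ => ?_
      rw [Finset.mul_sum]
      refine Finset.sum_congr rfl fun x _ => ?_
      rw [← AddChar.map_add_eq_mul, ← mul_add, ← chain_cons]
      rfl
    have hterm : ∀ a : ZMod r, (ZMod.stdAddChar (b * (a ^ 2 - a * y)) : ℂ) *
        ZMod.stdAddChar (-(b * a ^ 2 * (m : ZMod r) * (2 * ((m + 1 : ℕ) : ZMod r))⁻¹)) =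
        ZMod.stdAddChar (b * u * ((a - y * u⁻¹) ^ 2 * 2⁻¹)) *
        ZMod.stdAddChar (-(b * y ^ 2 * ((m + 1 : ℕ) : ZMod r) *
          (2 * ((m + 1 + 1 : ℕ) : ZMod r))⁻¹)) := by
      intro a
      rw [← AddChar.map_add_eq_mul, ← AddChar.map_add_eq_mul]
      congr 1
      rw [hu]
      push_cast at hm1 hm2 ⊢
      field_simp
      ring
    have hscale := halfGauss_scale hodd (mul_ne_zero hb hu0)
    rw [← Equiv.sum_comp (Equiv.subRight (y * u⁻¹))] at hscale
    simp only [Equiv.subRight_apply] at hscale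
    have hstep : ∀ a : ZMod r, (ZMod.stdAddChar (b * (a ^ 2 - a * y)) : ℂ) *
        ∑ x : Fin m → ZMod r, (ZMod.stdAddChar (b * chain m a x) : ℂ) =
        (quadraticChar (ZMod r) ((m + 1 : ℕ) : ZMod r) : ℂ) *
          ((quadraticChar (ZMod r) b : ℂ) * halfGauss r) ^ m *
        (ZMod.stdAddChar (b * u * ((a - y * u⁻¹) ^ 2 * 2⁻¹)) *
        ZMod.stdAddChar (-(b * y ^ 2 * ((m + 1 : ℕ) : ZMod r) *
          (2 * ((m + 1 + 1 : ℕ) : ZMod r))⁻¹))) := by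
      intro a
      rw [ih (by lia) a, ← hterm]
      ring
    rw [hsplit]
    simp_rw [hstep]
    rw [← Finset.mul_sum, ← Finset.sum_mul, hscale]
    -- `χ(m+1) χ(u) = χ(m+2)`.
    have hχ : (quadraticChar (ZMod r) ((m + 1 : ℕ) : ZMod r) : ℂ) *
        (quadraticChar (ZMod r) u : ℂ) =
        (quadraticChar (ZMod r) ((m + 1 + 1 : ℕ) : ZMod r) : ℂ) := by
      rw [← Int.cast_mul, ← map_mul, hu]
      congr 2
      field_simp
    rw [← hχ, map_mul]
    push_cast
    ring

theorem stmt0 (n r : ℕ) (hn : 2 ≤ n) (hr : r.Prime) (hodd : Odd r) (hrn : n < r)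
    (b : ℤ) (hb : ¬ ((r : ℤ) ∣ b)) :
    ∑ k : Fin (n - 1) → Fin r,
        zetaC r ^ (b * qf n (fun i => ((k i : ℕ) : ℤ)) / 2) =
      ((@legendreSym r ⟨hr⟩ (n : ℤ) : ℤ) : ℂ) *
        (((@legendreSym r ⟨hr⟩ b : ℤ) : ℂ) *
            Complex.exp (Real.pi * Complex.I * (1 - (r : ℂ)) / 4) *
            (Real.sqrt r : ℂ)) ^ (n - 1) := by
  have : Fact r.Prime := ⟨hr⟩
  obtain ⟨m, rfl⟩ : ∃ m, n = m + 1 := ⟨n - 1, by lia⟩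
  have hb' : (b : ZMod r) ≠ 0 := by rwa [Ne, ZMod.intCast_zmod_eq_zero_iff_dvd]
  have hterm : ∀ k : Fin m → Fin r,
      zetaC r ^ (b * qf (m + 1) (fun i : Fin m => ((k i : ℕ) : ℤ)) / 2) =
      ZMod.stdAddChar ((b : ZMod r) * chain m 0 fun i => (((k i : ℕ)) : ZMod r)) := by
    intro k
    rw [qf_eq_chain, mul_left_comm, Int.mul_ediv_cancel_left _ (by norm_num), zetaC_zpow,
      Int.cast_mul, chain_intCast]
    simp
  have hbij : Function.Bijective (fun t : Fin r => ((t : ℕ) : ZMod r)) := by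
    rw [Fintype.bijective_iff_injective_and_card]
    refine ⟨fun s t hst => ?_, by simp [ZMod.card]⟩
    rw [ZMod.natCast_eq_natCast_iff'] at hst
    rw [Nat.mod_eq_of_lt s.2, Nat.mod_eq_of_lt t.2] at hst
    exact Fin.ext hst
  have hsum := chainSum_eq hodd hb' m hrn 0
  rw [← (hbij.comp_left (α := Fin m)).sum_comp] at hsum
  simp only [ne_eq, OfNat.ofNat_ne_zero, not_false_eq_true, zero_pow, mul_zero, zero_mul, neg_zero,
    AddChar.map_zero_eq_one, mul_one] at hsum
  rw [mul_assoc, ← halfGauss_eq hodd]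
  refine Eq.trans (Finset.sum_congr rfl fun k _ => hterm k) (hsum.trans ?_)
  simp [legendreSym]
end

section
/- Let n ≥ 2, let r be an odd prime with r > n, let ζ = exp(2πi/r), and let d be a natural number with ⌊d/2⌋ ≤ (n−1)(r−1)/2. Let p be a polynomial in n−1 variables with rational coefficients, of total degree at most d, such that p(k) ∈ ℤ[1/((r−1)!·n!)] for every k ∈ ℤ^{n−1}. Then there exists c ∈ ℤ[1/((r−1)!·n!)][ζ] such that ∑_{k ∈ {0,…,r−1}^{n−1}} p(k) = c · (ζ−1)^{(n−1)(r−1)/2 − ⌊d/2⌋}. -/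
/-!
The sum of an integral-valued polynomial over the cube `{0, …, r-1}^m`, where `m = n - 1`, is in
fact highly divisible by `r` itself. By Newton's forward difference formula in the first variable,
`p(x, y) = ∑ j, (x choose j) * q_j(y)`, where `q_j` is the `j`-th forward difference of `p` at
`x = 0`: it is again integral-valued, and has degree at most `d - j`. Since
`∑_{x < r} (x choose j) = (r choose (j + 1))` is divisible by the prime `r` for `j < r - 1`, each
variable contributes a factor `r`, except in the term `j = r - 1`, which uses up `r - 1` of the
degree. Hence, by induction on `m` (`cube_sum_divisible`), the sum is divisible by
`r ^ (m - ⌊d / (r - 1)⌋)`.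

In `ℤ[ζ]` the number `r` is a multiple of `(ζ - 1) ^ (r - 1)`, so it remains to see that
`(r - 1) * (m - ⌊d / (r - 1)⌋) ≥ m * (r - 1) / 2 - ⌊d / 2⌋` (`exponent_le`).
-/

open scoped BigOperators

/-- The `j`-th forward difference at `0` of a polynomial in its first variable is a polynomial in
the remaining ones, whose total degree has dropped by at least `j`. -/
lemma exists_fwdDiff_poly {m : ℕ} (p : MvPolynomial (Fin (m + 1)) ℚ) (j : ℕ) :
    ∃ q : MvPolynomial (Fin m) ℚ, q.totalDegree ≤ p.totalDegree - j ∧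
      (p.totalDegree < j → q = 0) ∧
      ∀ s : Fin m → ℚ, MvPolynomial.eval s q =
        (fwdDiff 1)^[j] (fun y : ℚ => MvPolynomial.eval (Fin.cons y s : Fin (m + 1) → ℚ) p) 0 := by
  set F := MvPolynomial.finSuccEquiv ℚ m p with hF
  set a : ℕ → ℚ := fun i => (fwdDiff 1)^[j] (fun y : ℚ => y ^ i) 0 with ha
  have ha0 : ∀ i < j, a i = 0 := fun i hi => by
    simp only [ha, fwdDiff_iter_pow_eq_zero_of_lt hi, Pi.zero_apply]
  have hcoeff : ∀ i, F.coeff i ≠ 0 → (F.coeff i).totalDegree + i ≤ p.totalDegree := fun i hi =>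
    MvPolynomial.totalDegree_coeff_finSuccEquiv_add_le p i hi
  refine ⟨∑ i ∈ Finset.range (F.natDegree + 1), a i • F.coeff i, ?_, ?_, ?_⟩
  · refine MvPolynomial.totalDegree_finsetSum_le fun i _ => ?_
    by_cases hi : i < j
    · simp [ha0 i hi]
    by_cases hc : F.coeff i = 0
    · simp [hc]
    have h1 := hcoeff i hc
    have h2 := MvPolynomial.totalDegree_smul_le (a i) (F.coeff i)
    omega
  · intro hlt
    refine Finset.sum_eq_zero fun i _ => ?_
    by_cases hi : i < j
    · simp [ha0 i hi]
    by_cases hc : F.coeff i = 0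
    · simp [hc]
    have h1 := hcoeff i hc
    omega
  · intro s
    have hfun : (fun y : ℚ => MvPolynomial.eval (Fin.cons y s : Fin (m + 1) → ℚ) p) =
        ∑ i ∈ Finset.range (F.natDegree + 1),
          (MvPolynomial.eval s (F.coeff i)) • (fun y : ℚ => y ^ i) := by
      funext y
      rw [MvPolynomial.eval_eq_eval_mv_eval', Polynomial.eval_eq_sum_range'
        (n := F.natDegree + 1) (Nat.lt_succ_of_le Polynomial.natDegree_map_le)]
      simp [Finset.sum_apply, hF]
    rw [hfun, fwdDiff_iter_finsetSum]
    simp only [fwdDiff_iter_const_smul, Finset.sum_apply, Pi.smul_apply, smul_eq_mul, map_sum,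
      MvPolynomial.smul_eval]
    exact Finset.sum_congr rfl fun i _ => mul_comm _ _

/-- Newton's forward difference formula at `0`, summed over `0, …, r - 1`. -/
lemma sum_fin_eq_sum_fwdDiff (f : ℚ → ℚ) (r : ℕ) :
    ∑ x : Fin r, f ((x : ℕ) : ℚ) =
      ∑ j ∈ Finset.range r, (r.choose (j + 1) : ℚ) * (fwdDiff 1)^[j] f 0 := by
  rw [Fin.sum_univ_eq_sum_range (fun x : ℕ => f (x : ℚ)) r]
  have h : ∀ x ∈ Finset.range r, f (x : ℚ) =
      ∑ j ∈ Finset.range r, (x.choose j : ℚ) * (fwdDiff 1)^[j] f 0 := by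
    intro x hx
    have h1 := shift_eq_sum_fwdDiff_iter (1 : ℚ) f x 0
    simp only [zero_add, nsmul_eq_mul, mul_one] at h1
    rw [h1]
    refine Finset.sum_subset (fun i hi => ?_) (fun i _ hi => ?_)
    · simp only [Finset.mem_range] at *; omega
    · rw [Nat.choose_eq_zero_of_lt (by simpa [Nat.lt_succ_iff] using hi)]; simp
  rw [Finset.sum_congr rfl h, Finset.sum_comm]
  refine Finset.sum_congr rfl fun j hj => ?_
  rw [← Finset.sum_mul]
  congr 1
  obtain ⟨s, rfl⟩ : ∃ s, r = s + 1 := ⟨r - 1, by simp only [Finset.mem_range] at hj; omega⟩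
  rw [← Nat.sum_Icc_choose]
  push_cast
  refine (Finset.sum_subset (fun i hi => ?_) (fun i hi hi' => ?_)).symm
  · simp only [Finset.mem_range, Finset.mem_Icc] at *; omega
  · rw [Nat.choose_eq_zero_of_lt]
    · simp
    · simp only [Finset.mem_range, Finset.mem_Icc] at *; omega

/-- The degree bound `d` is used only through `d / (r - 1)`, the largest number of variables in
which a forward difference of order `r - 1` can be nonzero. The truncated exponent is `0` when
`d / (r - 1) ≥ m`. -/
lemma cube_sum_divisible {r : ℕ} (hr : r.Prime) (A : Subring ℚ) (m : ℕ) :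
    ∀ (d : ℕ) (p : MvPolynomial (Fin m) ℚ), p.totalDegree ≤ d →
      (∀ k : Fin m → ℕ, MvPolynomial.eval (fun i => (k i : ℚ)) p ∈ A) →
      ∃ a ∈ A, ∑ k : Fin m → Fin r, MvPolynomial.eval (fun i => ((k i : ℕ) : ℚ)) p =
        (r : ℚ) ^ (m - d / (r - 1)) * a := by
  have hr2 := hr.two_le
  induction m with
  | zero =>
    intro d p _ hA
    refine ⟨_, hA 0, ?_⟩
    simp only [Finset.univ_unique, Finset.sum_singleton, Nat.zero_sub, pow_zero, one_mul]
    congr 2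
    exact Subsingleton.elim _ _
  | succ m ih =>
    intro d p hd hA
    choose q hqdeg hq0 hq using exists_fwdDiff_poly p
    have hcons : ∀ (x : ℕ) (k : Fin m → ℕ),
        (Fin.cons (x : ℚ) (fun i => (k i : ℚ)) : Fin (m + 1) → ℚ) =
          fun i => (((Fin.cons x k : Fin (m + 1) → ℕ) i : ℕ) : ℚ) := by
      intro x k
      funext i
      refine Fin.cases ?_ (fun i => ?_) i <;> simp
    have hqA : ∀ (j : ℕ) (k : Fin m → ℕ), MvPolynomial.eval (fun i => (k i : ℚ)) (q j) ∈ A := by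
      intro j k
      rw [hq, fwdDiff_iter_eq_sum_shift]
      refine Subring.sum_mem _ fun i _ => Subring.zsmul_mem _ ?_ _
      simp only [zero_add, nsmul_eq_mul, mul_one, hcons]
      exact hA _
    have hsum : ∑ k : Fin (m + 1) → Fin r, MvPolynomial.eval (fun i => ((k i : ℕ) : ℚ)) p =
        ∑ j ∈ Finset.range r, (r.choose (j + 1) : ℚ) *
          ∑ k : Fin m → Fin r, MvPolynomial.eval (fun i => ((k i : ℕ) : ℚ)) (q j) := by
      rw [← (Fin.consEquiv (fun _ : Fin (m + 1) => Fin r)).sum_comp, Fintype.sum_prod_type,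
        Finset.sum_comm]
      simp only [Finset.mul_sum]
      rw [Finset.sum_comm (s := Finset.range r)]
      refine Finset.sum_congr rfl fun k _ => ?_
      simp only [hq]
      rw [← sum_fin_eq_sum_fwdDiff]
      refine Finset.sum_congr rfl fun x _ => ?_
      rw [hcons x (fun i => (k i : ℕ))]
      congr 2
      funext i
      refine Fin.cases ?_ (fun i => ?_) i <;> simp [Fin.consEquiv]
    have hterm : ∀ j ∈ Finset.range r, ∃ a ∈ A, (r.choose (j + 1) : ℚ) *
          ∑ k : Fin m → Fin r, MvPolynomial.eval (fun i => ((k i : ℕ) : ℚ)) (q j) =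
          (r : ℚ) ^ (m + 1 - d / (r - 1)) * a := by
      intro j hj
      rw [Finset.mem_range] at hj
      by_cases hlast : j = r - 1
      · by_cases hdj : p.totalDegree < j
        · exact ⟨0, A.zero_mem, by simp [hq0 j hdj]⟩
        have hdj' : r - 1 ≤ d := by omega
        obtain ⟨a, ha, h⟩ := ih (d - (r - 1)) (q j) (by have := hqdeg j; omega) (hqA j)
        refine ⟨a, ha, ?_⟩
        have hj1 : j + 1 = r := by omega
        -- here the binomial coefficient is `1`, and the exponent does not change
        have he : m - (d - (r - 1)) / (r - 1) = m + 1 - d / (r - 1) := by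
          rw [Nat.div_eq_sub_div (by omega) hdj']
          omega
        rw [h, hj1, Nat.choose_self, he]
        simp
      · obtain ⟨a, ha, h⟩ := ih d (q j) (by have := hqdeg j; omega) (hqA j)
        obtain ⟨b, hb⟩ := hr.dvd_choose_self (k := j + 1) (by omega) (by omega)
        rw [h, hb]
        obtain he | he : m - d / (r - 1) + 1 = m + 1 - d / (r - 1) ∨
            (m - d / (r - 1) = 0 ∧ m + 1 - d / (r - 1) = 0) := by omega
        · refine ⟨b * a, A.mul_mem (natCast_mem A b) ha, ?_⟩
          rw [← he]; push_cast; ring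
        · refine ⟨r * b * a, A.mul_mem (A.mul_mem (natCast_mem A r) (natCast_mem A b)) ha, ?_⟩
          rw [he.1, he.2]; push_cast; ring
    choose! a haA ha using hterm
    exact ⟨∑ j ∈ Finset.range r, a j, A.sum_mem haA, by
      rw [hsum, Finset.mul_sum]; exact Finset.sum_congr rfl ha⟩

/-- With `r - 1 = 2 * s` and `t = d / (r - 1) < m`, the claim follows from `s * t ≤ d / 2` and
`s * t ≤ s * m`; for `m ≤ t` the left-hand side vanishes. -/
lemma exponent_le {r : ℕ} (hodd : Odd r) (m d : ℕ) :
    m * (r - 1) / 2 - d / 2 ≤ (r - 1) * (m - d / (r - 1)) := by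
  obtain ⟨s, rfl⟩ := hodd
  have h1 : 2 * s + 1 - 1 = 2 * s := by omega
  rw [h1]
  have h2 : m * (2 * s) / 2 = m * s := by
    rw [show m * (2 * s) = 2 * (m * s) by ring]; omega
  rw [h2]
  have h3 : 2 * s * (d / (2 * s)) ≤ d := Nat.mul_div_le _ _
  generalize d / (2 * s) = t at *
  have h4 : s * t ≤ d / 2 := by
    rw [Nat.le_div_iff_mul_le (by norm_num)]; linarith
  rcases le_total m t with h | h
  · have : m * s ≤ s * t := by rw [mul_comm m]; exact Nat.mul_le_mul_left _ h
    omega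
  · obtain ⟨u, rfl⟩ := Nat.exists_eq_add_of_le h
    rw [Nat.add_sub_cancel_left]
    have : (t + u) * s ≤ 2 * s * u + s * t := by nlinarith [Nat.zero_le (s * u)]
    omega

theorem stmt11 (n r : ℕ) (hn : 2 ≤ n) (hr : r.Prime) (hodd : Odd r) (hrn : n < r)
    (d : ℕ) (hd : d / 2 ≤ (n - 1) * (r - 1) / 2)
    (p : MvPolynomial (Fin (n - 1)) ℚ) (hdeg : p.totalDegree ≤ d)
    (hint : ∀ k : Fin (n - 1) → ℤ,
      MvPolynomial.eval (fun i => ((k i : ℤ) : ℚ)) p ∈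
        Subring.closure ({((((r - 1).factorial * n.factorial : ℕ) : ℚ))⁻¹} : Set ℚ)) :
    ∃ c ∈ Subring.closure
        ({zetaC r, ((((r - 1).factorial * n.factorial : ℕ) : ℂ))⁻¹} : Set ℂ),
      ((∑ k : Fin (n - 1) → Fin r,
          MvPolynomial.eval (fun i => ((k i : ℕ) : ℚ)) p : ℚ) : ℂ) =
        c * (zetaC r - 1) ^ ((n - 1) * (r - 1) / 2 - d / 2) := by
  set N : ℕ := (r - 1).factorial * n.factorial with hN
  set B := Subring.closure ({zetaC r, ((N : ℕ) : ℂ)⁻¹} : Set ℂ) with hB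
  obtain ⟨a, ha, hsum⟩ := cube_sum_divisible hr _ (n - 1) d p hdeg
    (fun k => by simpa using hint (fun i => (k i : ℤ)))
  have haB : (a : ℂ) ∈ B := by
    have hle : Subring.closure ({(N : ℚ)⁻¹} : Set ℚ) ≤ B.comap (Rat.castHom ℂ) := by
      rw [Subring.closure_le, Set.singleton_subset_iff]
      have : ((N : ℕ) : ℂ)⁻¹ ∈ B := Subring.subset_closure (by simp)
      simpa using this
    simpa using hle ha
  have hzB : zetaC r ∈ B := Subring.subset_closure (by simp)
  have hprim : IsPrimitiveRoot (zetaC r) r := Complex.isPrimitiveRoot_exp r hr.ne_zero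
  obtain ⟨z, hz, hrz⟩ := hprim.self_sub_one_pow_dvd_order (k := r - 1)
    (Nat.sub_lt hr.pos one_pos)
  have hzB' : z ∈ B := by
    have hle : Algebra.adjoin ℤ ({zetaC r} : Set ℂ) ≤ subalgebraOfSubring B :=
      Algebra.adjoin_le (by simpa using hzB)
    exact hle hz
  obtain ⟨e, he⟩ := Nat.exists_eq_add_of_le (exponent_le hodd (n - 1) d)
  refine ⟨z ^ (n - 1 - d / (r - 1)) * (zetaC r - 1) ^ e * a,
    B.mul_mem (B.mul_mem (B.pow_mem hzB' _) (B.pow_mem (B.sub_mem hzB B.one_mem) _)) haB, ?_⟩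
  rw [hsum]
  push_cast
  rw [hrz, mul_pow, ← pow_mul, he, pow_add]
  ring
end
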